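/- Let (A, t) be a C_k-algebra and let K(A) = {x ∈ A : t(x) = x and ∇x = x}. Then: (b) K(A) contains 0 and 1, is closed under ∧, ∨, ∼ and *, and is a Boolean algebra (for every x ∈ K(A), x ∧ ∼x = 0 and x ∨ ∼x = 1); (d) for a ∈ A, the principal filter [a) = {x ∈ A : a ≤ x} is a c-filter if and only if a ∈ K(A); (e) if a ∈ K(A), then the smallest cyclic deductive system containing a equals [a). -/

import Mathlib

universe u

/-- Modal pseudocomplemented De Morgan algebra (mpM-algebra). -/
class MpM (A : Type u) extends DistribLattice A, BoundedOrder A where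
  dm : A → A   -- De Morgan negation ∼
  ps : A → A   -- pseudocomplement *
  dm_dm : ∀ x : A, dm (dm x) = x
  dm_sup : ∀ x y : A, dm (x ⊔ y) = dm x ⊓ dm y
  pseudo : ∀ a x : A, a ⊓ x = ⊥ ↔ x ≤ ps a
  modal : ∀ x : A, x ⊔ dm x ≤ x ⊔ ps x

open MpM

variable {A : Type u} [MpM A]

/-- ∇x = ∼(∼x ∧ x*) -/
def nabla (x : A) : A := dm (dm x ⊓ ps x)

/-- △x = ∼∇∼x -/
def tri (x : A) : A := dm (nabla (dm x))

/-- A C_k-algebra structure on an mpM-algebra `A`: an automorphism `t` with `t^k = id`. -/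
structure CkStr (A : Type u) [MpM A] (k : ℕ) where
  t : A → A
  bij : Function.Bijective t
  map_inf : ∀ x y : A, t (x ⊓ y) = t x ⊓ t y
  map_sup : ∀ x y : A, t (x ⊔ y) = t x ⊔ t y
  map_dm : ∀ x : A, t (dm x) = dm (t x)
  map_ps : ∀ x : A, t (ps x) = ps (t x)
  map_bot : t (⊥ : A) = ⊥
  map_top : t (⊤ : A) = ⊤
  periodic : ∀ x : A, t^[k] x = x

/-- Lattice filter: nonempty, upward closed, closed under binary meets. -/
def IsLatFilter (F : Set A) : Prop :=
  F.Nonempty ∧ (∀ x ∈ F, ∀ y : A, x ≤ y → y ∈ F) ∧ ∀ x ∈ F, ∀ y ∈ F, x ⊓ y ∈ F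

/-- c-filter: a filter closed under △ and t. -/
def IsCFilter {k : ℕ} (T : CkStr A k) (F : Set A) : Prop :=
  IsLatFilter F ∧ ∀ x ∈ F, tri x ∈ F ∧ T.t x ∈ F

/-- maximal c-filter: proper and not properly contained in a proper c-filter. -/
def IsMaxCFilter {k : ℕ} (T : CkStr A k) (N : Set A) : Prop :=
  IsCFilter T N ∧ N ≠ Set.univ ∧
    ∀ G : Set A, IsCFilter T G → G ≠ Set.univ → N ⊆ G → N = G

/-- prime filter -/
def IsPrimeFilter (P : Set A) : Prop :=
  IsLatFilter P ∧ P ≠ Set.univ ∧ ∀ x y : A, x ⊔ y ∈ P → x ∈ P ∨ y ∈ P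

/-- ultrafilter: maximal proper (lattice) filter -/
def IsUltraFilter (U : Set A) : Prop :=
  IsLatFilter U ∧ U ≠ Set.univ ∧
    ∀ G : Set A, IsLatFilter G → G ≠ Set.univ → U ⊆ G → U = G

/-- Birula–Rasiowa transformation φ(P) = A \ {∼x : x ∈ P}. -/
def brPhi (P : Set A) : Set A := Set.univ \ (dm '' P)

/-- a ⇁ b = (⋁_{i=1}^{k} ∇(∼ t^i(a))) ∨ b -/
def rimp {k : ℕ} (T : CkStr A k) (a b : A) : A :=
  ((Finset.Icc 1 k).sup fun i => nabla (dm (T.t^[i] a))) ⊔ b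

/-- cyclic deductive system -/
def IsCDS {k : ℕ} (T : CkStr A k) (D : Set A) : Prop :=
  (⊤ : A) ∈ D ∧ ∀ x ∈ D, ∀ y : A, rimp T x y ∈ D → y ∈ D

/-- maximal cyclic deductive system -/
def IsMaxCDS {k : ℕ} (T : CkStr A k) (M : Set A) : Prop :=
  IsCDS T M ∧ M ≠ Set.univ ∧
    ∀ G : Set A, IsCDS T G → G ≠ Set.univ → M ⊆ G → M = G

/-- the smallest cyclic deductive system containing `X` -/
def genCDS {k : ℕ} (T : CkStr A k) (X : Set A) : Set A :=
  ⋂₀ {D : Set A | IsCDS T D ∧ X ⊆ D}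

/-- K(A) = {x : t(x) = x and ∇x = x} -/
def Kset {k : ℕ} (T : CkStr A k) : Set A := {x : A | T.t x = x ∧ nabla x = x}

/-- consistency operator ∘x = ⋀_{i=0}^{k} t^i((∼x ∨ x) ∧ (x ∧ ∼x)*) -/
def cCirc {k : ℕ} (T : CkStr A k) (x : A) : A :=
  (Finset.Icc 0 k).inf fun i => T.t^[i] ((dm x ⊔ x) ⊓ ps (x ⊓ dm x))

/-- x → y = ∼((∼(x∨y))* ∧ (x∨y)) ∨ ((∼(x∧y))* ∧ (x∧y)) -/
def mpTo (x y : A) : A :=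
  dm (ps (dm (x ⊔ y)) ⊓ (x ⊔ y)) ⊔ (ps (dm (x ⊓ y)) ⊓ (x ⊓ y))

/-- x ⇒ y = (x → y) ∧ (∼y → ∼x) -/
def mpIff (x y : A) : A := mpTo x y ⊓ mpTo (dm y) (dm x)

theorem dm_anti {x y : A} (h : x ≤ y) : dm y ≤ dm x := by
  have := dm_sup x y
  rw [sup_eq_right.mpr h] at this
  rw [this]
  exact inf_le_left

theorem dm_inf' (x y : A) : dm (x ⊓ y) = dm x ⊔ dm y := by
  have := dm_sup (dm x) (dm y)
  rw [dm_dm, dm_dm] at this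
  rw [← this, dm_dm]

theorem dm_bot' : dm (⊥ : A) = ⊤ := by
  apply top_le_iff.mp
  have := dm_anti (bot_le : (⊥ : A) ≤ dm ⊤)
  rwa [dm_dm] at this

theorem nabla_fix (x : A) : nabla x = x ↔ x ⊓ dm x = ⊥ := by
  unfold nabla
  rw [pseudo]
  constructor
  · intro h
    have h2 := congrArg dm h
    rw [dm_dm] at h2
    exact inf_eq_left.mp h2
  · intro h
    rw [inf_eq_left.mpr h, dm_dm]

theorem sup_dm_top {x : A} (h : x ⊓ dm x = ⊥) : x ⊔ dm x = ⊤ := by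
  have := congrArg dm h
  rwa [dm_inf', dm_dm, dm_bot', sup_comm] at this

theorem ps_eq_dm {x : A} (h : x ⊓ dm x = ⊥) : ps x = dm x := by
  apply le_antisymm
  · have h1 : x ⊓ ps x = ⊥ := (pseudo _ _).mpr le_rfl
    calc ps x = ps x ⊓ (x ⊔ dm x) := by rw [sup_dm_top h, inf_top_eq]
      _ = ps x ⊓ dm x := by rw [inf_sup_left, inf_comm, h1, bot_sup_eq]
      _ ≤ dm x := inf_le_right
  · exact (pseudo _ _).mp h

theorem tri_eq (x : A) : tri x = x ⊓ ps (dm x) := by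
  unfold tri nabla
  rw [dm_dm, dm_dm]

theorem nabla_dm (x : A) : nabla (dm x) = dm (tri x) := by
  unfold tri
  rw [dm_dm]

theorem le_tri {a x : A} (h : a ⊓ dm a = ⊥) (hx : a ≤ x) : a ≤ tri x := by
  rw [tri_eq]
  refine le_inf hx ((pseudo _ _).mp ?_)
  apply le_bot_iff.mp
  rw [← h, inf_comm]
  exact inf_le_inf_left _ (dm_anti hx)

theorem mem_K {k : ℕ} (T : CkStr A k) (x : A) :
    x ∈ Kset T ↔ T.t x = x ∧ x ⊓ dm x = ⊥ := by
  unfold Kset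
  rw [Set.mem_setOf_eq, nabla_fix]

theorem t_mono {k : ℕ} (T : CkStr A k) : Monotone T.t := by
  intro x y h
  have := T.map_inf x y
  rw [inf_eq_left.mpr h] at this
  rw [this]
  exact inf_le_right

theorem inf_K {k : ℕ} (T : CkStr A k) {x y : A} (hx : x ∈ Kset T) (hy : y ∈ Kset T) :
    x ⊓ y ∈ Kset T := by
  rw [mem_K] at *
  refine ⟨by rw [T.map_inf, hx.1, hy.1], ?_⟩
  rw [dm_inf', inf_sup_left, inf_right_comm, hx.2, inf_assoc, hy.2]
  simp

theorem dm_K {k : ℕ} (T : CkStr A k) {x : A} (hx : x ∈ Kset T) : dm x ∈ Kset T := by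
  rw [mem_K] at *
  exact ⟨by rw [T.map_dm, hx.1], by rw [dm_dm, inf_comm, hx.2]⟩

theorem bot_K {k : ℕ} (T : CkStr A k) : (⊥ : A) ∈ Kset T := by
  rw [mem_K]
  exact ⟨T.map_bot, bot_inf_eq _⟩

theorem stmt13 {k : ℕ} (hk : 0 < k) (T : CkStr A k) :
    ((⊥ : A) ∈ Kset T ∧ (⊤ : A) ∈ Kset T ∧
      (∀ x ∈ Kset T, ∀ y ∈ Kset T, x ⊓ y ∈ Kset T ∧ x ⊔ y ∈ Kset T) ∧
      (∀ x ∈ Kset T, dm x ∈ Kset T ∧ ps x ∈ Kset T) ∧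
      (∀ x ∈ Kset T, x ⊓ dm x = ⊥ ∧ x ⊔ dm x = ⊤)) ∧
    (∀ a : A, IsCFilter T {x : A | a ≤ x} ↔ a ∈ Kset T) ∧
    (∀ a ∈ Kset T, genCDS T {a} = {x : A | a ≤ x}) := by
  refine ⟨⟨bot_K T, ?_, ?_, ?_, ?_⟩, ?_, ?_⟩
  · rw [← dm_bot']
    exact dm_K T (bot_K T)
  · intro x hx y hy
    refine ⟨inf_K T hx hy, ?_⟩
    have := dm_K T (inf_K T (dm_K T hx) (dm_K T hy))
    rwa [dm_inf', dm_dm, dm_dm] at this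
  · intro x hx
    refine ⟨dm_K T hx, ?_⟩
    rw [ps_eq_dm ((mem_K T x).mp hx).2]
    exact dm_K T hx
  · intro x hx
    have h := ((mem_K T x).mp hx).2
    exact ⟨h, sup_dm_top h⟩
  · intro a
    rw [mem_K]
    constructor
    · rintro ⟨-, h⟩
      obtain ⟨h1, h2⟩ := h a (le_refl a)
      simp only [Set.mem_setOf_eq] at h1 h2
      constructor
      · apply le_antisymm _ h2
        have hm := (t_mono T).monotone_iterate_of_le_map h2 (show 1 ≤ k from hk)
        simpa [T.periodic] using hm
      · rw [inf_comm, pseudo]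
        rw [tri_eq] at h1
        exact h1.trans inf_le_right
    · rintro ⟨h1, h2⟩
      refine ⟨⟨⟨a, le_refl a⟩, fun x hx y hy => le_trans hx hy,
        fun x hx y hy => le_inf hx hy⟩, fun x hx => ⟨le_tri h2 hx, ?_⟩⟩
      have := t_mono T (show a ≤ x from hx)
      rwa [h1] at this
  · intro a ha
    rw [mem_K] at ha
    obtain ⟨h1, h2⟩ := ha
    have hit : ∀ i, T.t^[i] a = a := fun i => Function.iterate_fixed h1 i
    apply Set.Subset.antisymm
    · apply Set.sInter_subset_of_mem
      refine ⟨⟨le_top, ?_⟩, ?_⟩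
      · intro x hx y hxy
        have hle : a ≤ dm a ⊔ y := by
          refine le_trans (show a ≤ rimp T x y from hxy) ?_
          unfold rimp
          refine sup_le_sup_right (Finset.sup_le fun i _ => ?_) _
          rw [nabla_dm]
          apply dm_anti
          apply le_tri h2
          have := (t_mono T).iterate i (show a ≤ x from hx)
          rwa [hit] at this
        have : a ⊓ (dm a ⊔ y) = a := inf_eq_left.mpr hle
        rw [inf_sup_left, h2, bot_sup_eq] at this
        exact inf_eq_left.mp this
      · rintro x rfl
        exact le_refl x
    · intro x hx
      rintro D ⟨⟨htop, hD⟩, haD⟩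
      refine hD a (haD rfl) x ?_
      suffices h : rimp T a x = ⊤ by rwa [h]
      apply top_le_iff.mp
      rw [← sup_dm_top h2, sup_comm]
      unfold rimp
      refine sup_le_sup ?_ hx
      refine le_trans ?_ (Finset.le_sup (f := fun i => nabla (dm (T.t^[i] a)))
        (Finset.mem_Icc.mpr ⟨le_refl 1, hk⟩))
      simp only [hit]
      rw [nabla_dm]
      apply dm_anti
      rw [tri_eq]
      exact inf_le_left
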